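/- Let μ ∈ (0,1]. There is a constant C, independent of μ, such that for every λ > 0, every t ∈ ℝ \ {0} and every Schwartz function f on ℝ², ‖S_{μ,2}(t) P_λ f‖_{L^∞(ℝ²)} ≤ C μ^{-1/2} |t|^{-1} ⟨√μ λ⟩^{3/2} ‖f‖_{L^1(ℝ²)}. -/

import Mathlib

noncomputable section

open MeasureTheory SchwartzMap
open scoped FourierTransform ENNReal

/-- The plane `ℝ²` as a Euclidean space. -/
abbrev E2 := EuclideanSpace ℝ (Fin 2)

/-- The Japanese bracket `⟨x⟩ = (1 + x²)^{1/2}`. -/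
def jap (x : ℝ) : ℝ := (1 + x ^ 2) ^ ((1 : ℝ) / 2)

/-- The symbol `m₂(ξ) = |ξ| (tanh|ξ|/|ξ|)^{1/2}`, with `m₂(0) = 0`. -/
def m2 (ξ : E2) : ℝ :=
  if ‖ξ‖ = 0 then 0 else ‖ξ‖ * Real.sqrt (Real.tanh ‖ξ‖ / ‖ξ‖)

/-- The propagator `S_{μ,2}(t) f = (e^{i(t/√μ) m₂(√μ ξ)} f̂(ξ))^∨`. -/
def prop2 (μ t : ℝ) (f : E2 → ℂ) : E2 → ℂ :=
  𝓕⁻ (fun ξ : E2 =>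
    Complex.exp (Complex.I * ((t / Real.sqrt μ) * m2 (Real.sqrt μ • ξ) : ℝ)) * 𝓕 f ξ)

/-- The Littlewood–Paley projection `P_λ`, `(P_λ f)^(ξ) = β(|ξ|/λ) f̂(ξ)`,
where `β(s) = χ(s) - χ(2s)`. -/
def proj2 (χ : ℝ → ℝ) (lam : ℝ) (f : E2 → ℂ) : E2 → ℂ :=
  𝓕⁻ (fun ξ : E2 => ((χ (‖ξ‖ / lam) - χ (2 * ‖ξ‖ / lam) : ℝ) : ℂ) * 𝓕 f ξ)

/-! By Young's inequality it suffices to bound the convolution kernel of `S_{μ,2}(t) P_λ` uniformly.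
Its symbol is radial, so in polar coordinates the kernel at `y` is, for `t > 0` and with `Λ = √μ λ`,
`s = t/√μ` and `ω(r) = √(r tanh r)`, equal to `λ²` times the one-dimensional integral of
`2π J₀(2π|y|λx) x β(x) e^{i s ω(Λx)}` over `[1/2, 2]`.

Write `J₀(ρ)` as a sum of two waves `e^{±iρ} a_±(ρ)` whose amplitudes, as follows from the decay
of `J₀` and `J₀'`, are `O(ρ^{-1/2})`. The slope of `s ω(Λx)` is at least
`m ≃ sΛ(1+Λ)^{-1/2}` and its second derivative is at most `-κ ≃ -sΛ³(1+Λ)^{-5/2}`. If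
`2π|y|λ` is below `m/2` the total phase has slope `≳ m`, which gives a bound `O(1/m)`; otherwise the
amplitude gains `O(m^{-1/2})` and the second-derivative van der Corput lemma gives another
`O(κ^{-1/2})`. Both `1/m` and `(mκ)^{-1/2}` are `O((1+Λ)^{3/2} s⁻¹ Λ⁻²)`. -/

/-! ### Van der Corput estimates -/

section VanDerCorput

variable {a b κ : ℝ} {φ φ' φ'' : ℝ → ℝ}

lemma hasDerivAt_exp_ofReal_mul_I {x : ℝ} (h : HasDerivAt φ (φ' x) x) :
    HasDerivAt (fun x ↦ Complex.exp (φ x * Complex.I))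
      (Complex.exp (φ x * Complex.I) * (φ' x * Complex.I)) x :=
  (h.ofReal_comp.mul_const Complex.I).cexp

lemma integral_exp_ofReal_mul_I_eq (hab : a ≤ b)
    (hφ : ∀ x ∈ Set.Icc a b, HasDerivAt φ (φ' x) x)
    (hφ' : ∀ x ∈ Set.Icc a b, HasDerivAt φ' (φ'' x) x)
    (hφ'' : ContinuousOn φ'' (Set.Icc a b)) (hne : ∀ x ∈ Set.Icc a b, φ' x ≠ 0) :
    (∫ x in a..b, Complex.exp (φ x * Complex.I)) * Complex.I =
      ((φ' b)⁻¹ : ℝ) * Complex.exp (φ b * Complex.I) -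
        ((φ' a)⁻¹ : ℝ) * Complex.exp (φ a * Complex.I) -
        ∫ x in a..b, ((-φ'' x / φ' x ^ 2 : ℝ) : ℂ) * Complex.exp (φ x * Complex.I) := by
  have hIcc : Set.uIcc a b = Set.Icc a b := Set.uIcc_of_le hab
  have hφ_cont : ContinuousOn φ (Set.Icc a b) :=
    fun x hx ↦ (hφ x hx).continuousAt.continuousWithinAt
  have hφ'_cont : ContinuousOn φ' (Set.Icc a b) :=
    fun x hx ↦ (hφ' x hx).continuousAt.continuousWithinAt
  have hinv : ContinuousOn (fun x ↦ ((-φ'' x / φ' x ^ 2 : ℝ) : ℂ)) (Set.Icc a b) :=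
    Complex.continuous_ofReal.comp_continuousOn
      (hφ''.neg.div (hφ'_cont.pow 2) fun x hx ↦ pow_ne_zero 2 (hne x hx))
  rw [← intervalIntegral.integral_mul_deriv_eq_deriv_mul (a := a) (b := b)
    (u := fun x ↦ (((φ' x)⁻¹ : ℝ) : ℂ))
    (fun x hx ↦ ((hφ' x (hIcc ▸ hx)).inv (hne x (hIcc ▸ hx))).ofReal_comp)
    (fun x hx ↦ hasDerivAt_exp_ofReal_mul_I (hφ x (hIcc ▸ hx)))
    (hIcc ▸ hinv).intervalIntegrable
    (ContinuousOn.intervalIntegrable (by rw [hIcc]; fun_prop)),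
    ← intervalIntegral.integral_mul_const]
  refine intervalIntegral.integral_congr fun x hx ↦ ?_
  have := Complex.ofReal_ne_zero.2 (hne x (hIcc ▸ hx))
  rw [Complex.ofReal_inv]
  field_simp

/-- The function `x ↦ 1 / φ' x` is monotone, so its total variation is at most `2 / κ`. -/
lemma norm_integral_exp_le_of_le_abs_deriv (hab : a ≤ b)
    (hφ : ∀ x ∈ Set.Icc a b, HasDerivAt φ (φ' x) x)
    (hφ' : ∀ x ∈ Set.Icc a b, HasDerivAt φ' (φ'' x) x)
    (hφ'' : ContinuousOn φ'' (Set.Icc a b)) (hconcave : ∀ x ∈ Set.Icc a b, φ'' x ≤ 0)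
    (hκ : 0 < κ) (hlower : ∀ x ∈ Set.Icc a b, κ ≤ |φ' x|) :
    ‖∫ x in a..b, Complex.exp (φ x * Complex.I)‖ ≤ 4 / κ := by
  have hne : ∀ x ∈ Set.Icc a b, φ' x ≠ 0 := fun x hx ↦ abs_pos.1 (hκ.trans_le (hlower x hx))
  have hinv : ∀ x ∈ Set.Icc a b, |(φ' x)⁻¹| ≤ κ⁻¹ := fun x hx ↦ by
    rw [abs_inv]
    exact inv_anti₀ hκ (hlower x hx)
  have hinv_a := hinv a (Set.left_mem_Icc.2 hab)
  have hinv_b := hinv b (Set.right_mem_Icc.2 hab)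
  have hq : IntervalIntegrable (fun x ↦ -φ'' x / φ' x ^ 2) volume a b :=
    ContinuousOn.intervalIntegrable_of_Icc hab (hφ''.neg.div
      (fun x hx ↦ ((hφ' x hx).continuousAt.pow 2).continuousWithinAt)
      fun x hx ↦ pow_ne_zero 2 (hne x hx))
  have hvariation : ‖∫ x in a..b, ((-φ'' x / φ' x ^ 2 : ℝ) : ℂ) * Complex.exp (φ x * Complex.I)‖
      ≤ (φ' b)⁻¹ - (φ' a)⁻¹ := by
    rw [← intervalIntegral.integral_eq_sub_of_hasDerivAt (f := fun x ↦ (φ' x)⁻¹)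
      (fun x hx ↦ (hφ' x (Set.uIcc_of_le hab ▸ hx)).inv (hne x (Set.uIcc_of_le hab ▸ hx))) hq]
    refine intervalIntegral.norm_integral_le_of_norm_le hab (ae_of_all _ fun x hx ↦ ?_) hq
    rw [norm_mul, Complex.norm_exp_ofReal_mul_I, mul_one, Complex.norm_real, Real.norm_of_nonneg]
    exact div_nonneg (neg_nonneg.2 (hconcave x (Set.Ioc_subset_Icc_self hx))) (sq_nonneg _)
  calc ‖∫ x in a..b, Complex.exp (φ x * Complex.I)‖
      = ‖(∫ x in a..b, Complex.exp (φ x * Complex.I)) * Complex.I‖ := by simp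
    _ ≤ |(φ' b)⁻¹| + |(φ' a)⁻¹| + ((φ' b)⁻¹ - (φ' a)⁻¹) := by
        rw [integral_exp_ofReal_mul_I_eq hab hφ hφ' hφ'' hne]
        refine (norm_sub_le _ _).trans (add_le_add ((norm_sub_le _ _).trans_eq ?_) hvariation)
        simp only [norm_mul, Complex.norm_exp_ofReal_mul_I, mul_one, Complex.norm_real,
          Real.norm_eq_abs]
    _ ≤ 4 / κ := by
        rw [div_eq_mul_inv]
        linarith [le_abs_self (φ' b)⁻¹, neg_abs_le (φ' a)⁻¹]

lemma exists_forall_mul_abs_sub_le_abs_of_deriv_le_neg (hab : a ≤ b)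
    (hφ : ∀ x ∈ Set.Icc a b, HasDerivAt φ (φ' x) x) (hupper : ∀ x ∈ Set.Icc a b, φ' x ≤ -κ) :
    ∃ x₀ ∈ Set.Icc a b, ∀ x ∈ Set.Icc a b, κ * |x - x₀| ≤ |φ x| := by
  have hcont : ContinuousOn φ (Set.Icc a b) :=
    fun x hx ↦ (hφ x hx).continuousAt.continuousWithinAt
  have hslope : ∀ x ∈ Set.Icc a b, ∀ y ∈ Set.Icc a b, x ≤ y → φ y - φ x ≤ -κ * (y - x) := by
    refine (convex_Icc a b).image_sub_le_mul_sub_of_deriv_le hcont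
      (fun x hx ↦ (hφ x (interior_subset hx)).differentiableAt.differentiableWithinAt)
      fun x hx ↦ ?_
    rw [(hφ x (interior_subset hx)).deriv]
    exact hupper x (interior_subset hx)
  obtain ⟨x₀, hx₀, hleft, hright⟩ :
      ∃ x₀ ∈ Set.Icc a b, (a < x₀ → 0 ≤ φ x₀) ∧ (x₀ < b → φ x₀ ≤ 0) := by
    rcases le_total 0 (φ b) with hb | hb
    · exact ⟨b, Set.right_mem_Icc.2 hab, fun _ ↦ hb, fun h ↦ absurd h (lt_irrefl b)⟩
    rcases le_total (φ a) 0 with ha | ha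
    · exact ⟨a, Set.left_mem_Icc.2 hab, fun h ↦ absurd h (lt_irrefl a), fun _ ↦ ha⟩
    obtain ⟨x₀, hx₀, h0⟩ := intermediate_value_Icc' hab hcont ⟨hb, ha⟩
    exact ⟨x₀, hx₀, fun _ ↦ h0.ge, fun _ ↦ h0.le⟩
  refine ⟨x₀, hx₀, fun x hx ↦ ?_⟩
  rcases lt_trichotomy x x₀ with h | rfl | h
  · rw [abs_sub_comm, abs_of_pos (sub_pos.2 h)]
    linarith [hslope x hx x₀ hx₀ h.le, hleft (hx.1.trans_lt h), le_abs_self (φ x)]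
  · simp
  · rw [abs_of_pos (sub_pos.2 h)]
    linarith [hslope x₀ hx₀ x hx h.le, hright (h.trans_le hx.2), neg_le_abs (φ x)]

lemma norm_integral_le_of_norm_integral_away_le {g : ℝ → ℂ} {x₀ δ K : ℝ} (hab : a ≤ b)
    (hx₀ : x₀ ∈ Set.Icc a b) (hδ : 0 ≤ δ) (hK : 0 ≤ K) (hg : ContinuousOn g (Set.Icc a b))
    (hg_le : ∀ x ∈ Set.Icc a b, ‖g x‖ ≤ 1)
    (haway : ∀ u v, a ≤ u → u ≤ v → v ≤ b → (∀ x ∈ Set.Icc u v, δ ≤ |x - x₀|) →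
      ‖∫ x in u..v, g x‖ ≤ K) :
    ‖∫ x in a..b, g x‖ ≤ 2 * K + 2 * δ := by
  have ha := Set.left_mem_Icc.2 hab
  have hb := Set.right_mem_Icc.2 hab
  have hc : max a (x₀ - δ) ∈ Set.Icc a b := ⟨le_max_left _ _, max_le hab (by linarith [hx₀.2])⟩
  have hd : min b (x₀ + δ) ∈ Set.Icc a b := ⟨le_min hab (by linarith [hx₀.1]), min_le_left _ _⟩
  have left : ‖∫ x in a..max a (x₀ - δ), g x‖ ≤ K := by
    rcases le_total (x₀ - δ) a with h | h
    · simpa [max_eq_left h] using hK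
    · rw [max_eq_right h]
      exact haway _ _ le_rfl h (by linarith [hx₀.2])
        fun x hx ↦ by linarith [hx.2, neg_le_abs (x - x₀)]
  have right : ‖∫ x in min b (x₀ + δ)..b, g x‖ ≤ K := by
    rcases le_total b (x₀ + δ) with h | h
    · simpa [min_eq_left h] using hK
    · rw [min_eq_right h]
      exact haway _ _ (by linarith [hx₀.1]) h le_rfl
        fun x hx ↦ by linarith [hx.1, le_abs_self (x - x₀)]
  have middle : ‖∫ x in max a (x₀ - δ)..min b (x₀ + δ), g x‖ ≤ 2 * δ := by
    refine (intervalIntegral.norm_integral_le_of_norm_le_const fun x hx ↦ hg_le x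
      (Set.uIcc_subset_Icc hc hd (Set.uIoc_subset_uIcc hx))).trans ?_
    rw [one_mul, abs_le]
    constructor <;>
      linarith [le_max_right a (x₀ - δ), min_le_right b (x₀ + δ),
        max_le hx₀.1 (sub_le_self x₀ hδ), le_min hx₀.2 (le_add_of_nonneg_right hδ)]
  have hint : ∀ u ∈ Set.Icc a b, ∀ v ∈ Set.Icc a b, IntervalIntegrable g volume u v :=
    fun u hu v hv ↦ (hg.mono (Set.uIcc_subset_Icc hu hv)).intervalIntegrable
  rw [← intervalIntegral.integral_add_adjacent_intervals (hint a ha _ hd) (hint _ hd b hb),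
    ← intervalIntegral.integral_add_adjacent_intervals (hint a ha _ hc) (hint _ hc _ hd)]
  calc _ ≤ K + 2 * δ + K := norm_add₃_le.trans (add_le_add (add_le_add left middle) right)
    _ = 2 * K + 2 * δ := by ring

/-- Where `|φ'|` is at most `√κ` the integrand is bounded by `1` on a set of length `2 / √κ`; the
first derivative test handles the rest. -/
lemma norm_integral_exp_le_of_deriv2_le_neg (hab : a ≤ b)
    (hφ : ∀ x ∈ Set.Icc a b, HasDerivAt φ (φ' x) x)
    (hφ' : ∀ x ∈ Set.Icc a b, HasDerivAt φ' (φ'' x) x)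
    (hφ'' : ContinuousOn φ'' (Set.Icc a b)) (hκ : 0 < κ)
    (hupper : ∀ x ∈ Set.Icc a b, φ'' x ≤ -κ) :
    ‖∫ x in a..b, Complex.exp (φ x * Complex.I)‖ ≤ 10 / √κ := by
  obtain ⟨x₀, hx₀, hlower⟩ := exists_forall_mul_abs_sub_le_abs_of_deriv_le_neg hab hφ' hupper
  have hκ' : 0 < √κ := Real.sqrt_pos.2 hκ
  calc ‖∫ x in a..b, Complex.exp (φ x * Complex.I)‖
      ≤ 2 * (4 / √κ) + 2 * (1 / √κ) := by
        refine norm_integral_le_of_norm_integral_away_le hab hx₀ (by positivity) (by positivity)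
          (fun x hx ↦ (hasDerivAt_exp_ofReal_mul_I (hφ x hx)).continuousAt.continuousWithinAt)
          (fun x _ ↦ (Complex.norm_exp_ofReal_mul_I (φ x)).le) fun u v hau huv hvb hδ ↦ ?_
        have hsub : Set.Icc u v ⊆ Set.Icc a b := Set.Icc_subset_Icc hau hvb
        refine norm_integral_exp_le_of_le_abs_deriv huv (fun x hx ↦ hφ x (hsub hx))
          (fun x hx ↦ hφ' x (hsub hx)) (hφ''.mono hsub)
          (fun x hx ↦ by linarith [hupper x (hsub hx)]) hκ' fun x hx ↦ ?_
        calc √κ = κ * (1 / √κ) := by rw [mul_one_div, Real.div_sqrt]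
          _ ≤ κ * |x - x₀| := mul_le_mul_of_nonneg_left (hδ x hx) hκ.le
          _ ≤ |φ' x| := hlower x (hsub hx)
    _ = 10 / √κ := by ring

lemma norm_integral_mul_le_of_norm_primitive_le {M G : ℝ} {A A' g : ℝ → ℂ} (hab : a ≤ b)
    (hA : ∀ x ∈ Set.Icc a b, HasDerivAt A (A' x) x) (hA' : ContinuousOn A' (Set.Icc a b))
    (hAb : A b = 0) (hM : ∀ x ∈ Set.Icc a b, ‖A' x‖ ≤ M) (hg : ContinuousOn g (Set.Icc a b))
    (hG : ∀ x ∈ Set.Icc a b, ‖∫ y in a..x, g y‖ ≤ G) :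
    ‖∫ x in a..b, A x * g x‖ ≤ M * G * (b - a) := by
  have hIcc : Set.uIcc a b = Set.Icc a b := Set.uIcc_of_le hab
  have hgi : IntervalIntegrable g volume a b := hg.intervalIntegrable_of_Icc hab
  have hparts : ∫ x in a..b, A x * g x = -∫ x in a..b, A' x * ∫ y in a..x, g y := by
    rw [intervalIntegral.integral_mul_deriv_eq_deriv_mul_of_hasDerivAt
      (v := fun x ↦ ∫ y in a..x, g y)
      (fun x hx ↦ (hA x (hIcc ▸ hx)).continuousAt.continuousWithinAt)
      (intervalIntegral.continuousOn_primitive_interval (hIcc ▸ hg.integrableOn_Icc)) ?_ ?_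
      (hA'.intervalIntegrable_of_Icc hab) hgi]
    · simp [hAb]
    all_goals
      rw [min_eq_left hab, max_eq_right hab]
      intro x hx
    · exact hA x (Set.Ioo_subset_Icc_self hx)
    · exact intervalIntegral.integral_hasDerivAt_right
        (hgi.mono_set (hIcc ▸ Set.uIcc_subset_Icc (Set.left_mem_Icc.2 hab)
          (Set.Ioo_subset_Icc_self hx)))
        ((hg.mono Set.Ioo_subset_Icc_self).stronglyMeasurableAtFilter isOpen_Ioo x hx)
        (hg.continuousAt (Icc_mem_nhds hx.1 hx.2))
  rw [hparts, norm_neg, ← abs_of_nonneg (sub_nonneg.2 hab)]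
  refine intervalIntegral.norm_integral_le_of_norm_le_const fun x hx ↦ ?_
  have hx' : x ∈ Set.Icc a b := Set.Ioc_subset_Icc_self (Set.uIoc_of_le hab ▸ hx)
  exact norm_mul_le_of_le (hM x hx') (hG x hx')

end VanDerCorput

/-! ### The Bessel function `J₀` -/

section Bessel

/-- The `k`-th derivative of the Bessel function `J₀`, multiplied by `2π`, through the integral
representation `2π J₀(ρ) = ∫_{-π}^{π} cos (ρ cos θ) dθ`. -/
def besselDeriv (k : ℕ) (ρ : ℝ) : ℝ :=
  ∫ θ in -Real.pi..Real.pi, Real.cos θ ^ k * Real.cos (ρ * Real.cos θ + k * (Real.pi / 2))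

lemma norm_besselDeriv_integrand_le (k : ℕ) (ρ θ c : ℝ) :
    ‖Real.cos θ ^ k * Real.cos (ρ * Real.cos θ + c)‖ ≤ 1 := by
  rw [norm_mul, norm_pow]
  exact mul_le_one₀ (pow_le_one₀ (norm_nonneg _) (Real.abs_cos_le_one _)) (norm_nonneg _)
    (Real.abs_cos_le_one _)

lemma hasDerivAt_besselDeriv (k : ℕ) (ρ : ℝ) :
    HasDerivAt (besselDeriv k) (besselDeriv (k + 1) ρ) ρ := by
  refine (intervalIntegral.hasDerivAt_integral_of_dominated_loc_of_deriv_le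
    (F := fun ρ θ ↦ Real.cos θ ^ k * Real.cos (ρ * Real.cos θ + k * (Real.pi / 2)))
    (F' := fun ρ θ ↦
      Real.cos θ ^ (k + 1) * Real.cos (ρ * Real.cos θ + (k + 1 : ℕ) * (Real.pi / 2)))
    (bound := fun _ ↦ 1) Filter.univ_mem
    (.of_forall fun x ↦ (by fun_prop : Continuous _).aestronglyMeasurable)
    ((by fun_prop : Continuous _).intervalIntegrable _ _)
    (by fun_prop : Continuous _).aestronglyMeasurable
    (ae_of_all _ fun θ _ x _ ↦ norm_besselDeriv_integrand_le _ _ _ _)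
    (continuous_const.intervalIntegrable _ _) (ae_of_all _ fun θ _ x _ ↦ ?_)).2
  have hderiv := ((((hasDerivAt_id x).mul_const (Real.cos θ)).add_const
    (k * (Real.pi / 2))).cos).const_mul (Real.cos θ ^ k)
  refine hderiv.congr_deriv ?_
  rw [show x * Real.cos θ + (k + 1 : ℕ) * (Real.pi / 2) =
    x * Real.cos θ + k * (Real.pi / 2) + Real.pi / 2 by push_cast; ring, Real.cos_add_pi_div_two]
  simp only [id_eq]
  ring

lemma continuous_besselDeriv (k : ℕ) : Continuous (besselDeriv k) :=
  continuous_iff_continuousAt.2 fun ρ ↦ (hasDerivAt_besselDeriv k ρ).continuousAt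

lemma abs_besselDeriv_le (k : ℕ) (ρ : ℝ) : |besselDeriv k ρ| ≤ 2 * Real.pi := by
  refine (intervalIntegral.norm_integral_le_of_norm_le_const
    fun θ _ ↦ norm_besselDeriv_integrand_le k ρ θ _).trans_eq ?_
  rw [one_mul, sub_neg_eq_add, ← two_mul, abs_of_pos Real.two_pi_pos]

lemma besselDeriv_ode (ρ : ℝ) :
    ρ * (besselDeriv 0 ρ + besselDeriv 2 ρ) = -besselDeriv 1 ρ := by
  have hint : ∀ k : ℕ, IntervalIntegrable (fun θ ↦ Real.cos θ ^ k *
      Real.cos (ρ * Real.cos θ + k * (Real.pi / 2))) volume (-Real.pi) Real.pi :=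
    fun k ↦ (by fun_prop : Continuous _).intervalIntegrable _ _
  have hsum := intervalIntegral.integral_eq_sub_of_hasDerivAt (a := -Real.pi) (b := Real.pi)
    (f := fun θ ↦ Real.sin θ * Real.cos (ρ * Real.cos θ + (1 : ℕ) * (Real.pi / 2)))
    (fun θ _ ↦ ?_) ((((hint 0).add (hint 2)).const_mul ρ).add (hint 1))
  · rw [intervalIntegral.integral_add (((hint 0).add (hint 2)).const_mul ρ) (hint 1),
      intervalIntegral.integral_const_mul, intervalIntegral.integral_add (hint 0) (hint 2)] at hsum
    simp only [Real.sin_pi, Real.sin_neg, neg_zero, zero_mul, sub_zero] at hsum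
    exact eq_neg_of_add_eq_zero_left hsum
  · refine ((Real.hasDerivAt_sin θ).mul ((((Real.hasDerivAt_cos θ).const_mul ρ).add_const
      ((1 : ℕ) * (Real.pi / 2))).cos)).congr_deriv ?_
    have hpi : ρ * Real.cos θ + (2 : ℕ) * (Real.pi / 2) = ρ * Real.cos θ + Real.pi := by
      push_cast; ring
    have hpi2 : ρ * Real.cos θ + (1 : ℕ) * (Real.pi / 2) = ρ * Real.cos θ + Real.pi / 2 := by
      push_cast; ring
    rw [hpi, hpi2, Real.cos_add_pi, Real.cos_add_pi_div_two, Real.sin_add_pi_div_two]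
    simp only [pow_zero, Nat.cast_zero, zero_mul, add_zero]
    linear_combination (ρ * Real.cos (ρ * Real.cos θ)) * Real.sin_sq θ

section BesselODE

variable {u u' : ℝ → ℝ} (hu : ∀ ρ, 0 < ρ → HasDerivAt u (u' ρ) ρ)
  (hu' : ∀ ρ, 0 < ρ → HasDerivAt u' (-(u' ρ / ρ) - u ρ) ρ)
include hu hu'

lemma antitoneOn_besselEnergy :
    AntitoneOn (fun ρ ↦ ρ * (u ρ ^ 2 + u' ρ ^ 2) + u ρ * u' ρ + u ρ ^ 2 / (2 * ρ))
      (Set.Ioi 0) := by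
  have hderiv : ∀ ρ ∈ Set.Ioi (0 : ℝ), HasDerivAt
      (fun ρ ↦ ρ * (u ρ ^ 2 + u' ρ ^ 2) + u ρ * u' ρ + u ρ ^ 2 / (2 * ρ))
      (-(u ρ ^ 2 / (2 * ρ ^ 2))) ρ := fun ρ hρ ↦ by
    have hρ0 : ρ ≠ 0 := (Set.mem_Ioi.1 hρ).ne'
    have h := (((hasDerivAt_id ρ).mul (((hu ρ hρ).pow 2).add ((hu' ρ hρ).pow 2))).add
      ((hu ρ hρ).mul (hu' ρ hρ))).add
      (((hu ρ hρ).pow 2).div ((hasDerivAt_id ρ).const_mul 2) (by simpa using hρ0))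
    refine h.congr_deriv ?_
    simp only [id_eq, Pi.add_apply, Pi.pow_apply]
    field_simp
    ring
  refine antitoneOn_of_hasDerivWithinAt_nonpos (convex_Ioi 0)
    (fun ρ hρ ↦ (hderiv ρ hρ).continuousAt.continuousWithinAt)
    (fun ρ hρ ↦ (hderiv ρ (interior_subset hρ)).hasDerivWithinAt)
    fun ρ _ ↦ neg_nonpos.2 (by positivity)

lemma mul_sq_add_sq_le_of_bessel_ode {ρ : ℝ} (hρ : 1 ≤ ρ) :
    ρ * (u ρ ^ 2 + u' ρ ^ 2) ≤ 4 * (u 1 ^ 2 + u' 1 ^ 2) := by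
  have hρ0 : 0 < ρ := one_pos.trans_le hρ
  have henergy := antitoneOn_besselEnergy hu hu' (Set.mem_Ioi.2 one_pos) (Set.mem_Ioi.2 hρ0) hρ
  have hnonneg : 0 ≤ u ρ ^ 2 / (2 * ρ) := by positivity
  simp only at henergy
  nlinarith [sq_nonneg (u ρ + u' ρ), sq_nonneg (u 1 - u' 1), mul_nonneg (sub_nonneg.2 hρ)
    (add_nonneg (sq_nonneg (u ρ)) (sq_nonneg (u' ρ)))]

end BesselODE

lemma abs_bessel_add_abs_deriv_le {ρ : ℝ} (hρ : 0 < ρ) :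
    |besselDeriv 0 ρ| + |besselDeriv 1 ρ| ≤ 8 * Real.pi / √ρ := by
  rw [le_div_iff₀ (Real.sqrt_pos.2 hρ)]
  have hbound : ∀ ρ k, besselDeriv k ρ ^ 2 ≤ (2 * Real.pi) ^ 2 := fun ρ k ↦
    sq_le_sq.2 ((abs_besselDeriv_le k ρ).trans (le_abs_self _))
  rcases le_total ρ 1 with h | h
  · calc (|besselDeriv 0 ρ| + |besselDeriv 1 ρ|) * √ρ
        ≤ (2 * Real.pi + 2 * Real.pi) * 1 := by
          gcongr
          exacts [abs_besselDeriv_le 0 ρ, abs_besselDeriv_le 1 ρ, Real.sqrt_le_one.2 h]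
      _ ≤ 8 * Real.pi := by linarith [Real.pi_pos]
  · have hdecay := mul_sq_add_sq_le_of_bessel_ode (u := besselDeriv 0) (u' := besselDeriv 1)
      (fun r _ ↦ hasDerivAt_besselDeriv 0 r) (fun r hr ↦ by
        convert hasDerivAt_besselDeriv 1 r using 1
        rw [← neg_div, ← besselDeriv_ode, mul_div_cancel_left₀ _ hr.ne', add_sub_cancel_left]) h
    refine abs_le_of_sq_le_sq' ?_ (by positivity) |>.2
    calc ((|besselDeriv 0 ρ| + |besselDeriv 1 ρ|) * √ρ) ^ 2
        = ρ * (|besselDeriv 0 ρ| + |besselDeriv 1 ρ|) ^ 2 := by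
          rw [mul_pow, Real.sq_sqrt hρ.le, mul_comm]
      _ ≤ ρ * (2 * (besselDeriv 0 ρ ^ 2 + besselDeriv 1 ρ ^ 2)) := by
          gcongr
          simpa only [sq_abs] using add_sq_le (a := |besselDeriv 0 ρ|) (b := |besselDeriv 1 ρ|)
      _ ≤ (8 * Real.pi) ^ 2 := by linarith [hbound 1 0, hbound 1 1]

end Bessel

/-! ### Oscillatory integrals with a Bessel factor -/

section BesselOscillatory

/-- The amplitude of `e^{isρ}`, for `s = ±1`, in the splitting of `2π J₀(ρ)` into an outgoing and
an incoming wave. -/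
def besselAmp (s ρ : ℝ) : ℂ :=
  Complex.exp ((-s * ρ : ℝ) * Complex.I) *
    (besselDeriv 0 ρ - s * Complex.I * besselDeriv 1 ρ) / 2

/-- The derivative of `besselAmp s`. -/
def besselAmpDeriv (s ρ : ℝ) : ℂ :=
  Complex.exp ((-s * ρ : ℝ) * Complex.I) *
    (-(s * Complex.I) * (besselDeriv 0 ρ + besselDeriv 2 ρ : ℝ)) / 2

lemma besselDeriv_zero_eq_waves (ρ : ℝ) :
    (besselDeriv 0 ρ : ℂ) = besselAmp 1 ρ * Complex.exp ((1 * ρ : ℝ) * Complex.I) +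
      besselAmp (-1) ρ * Complex.exp ((-1 * ρ : ℝ) * Complex.I) := by
  have hexp : Complex.exp (-ρ * Complex.I) * Complex.exp (ρ * Complex.I) = 1 := by
    rw [← Complex.exp_add, neg_mul, neg_add_cancel, Complex.exp_zero]
  simp only [besselAmp]
  push_cast
  simp only [neg_neg, one_mul, neg_mul] at hexp ⊢
  linear_combination (-(besselDeriv 0 ρ : ℂ)) * hexp

variable {s : ℝ}

lemma hasDerivAt_besselAmp (hs : |s| = 1) (ρ : ℝ) :
    HasDerivAt (besselAmp s) (besselAmpDeriv s ρ) ρ := by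
  have hs2 : (s : ℂ) ^ 2 = 1 := by
    exact_mod_cast (by rw [← sq_abs, hs, one_pow] : s ^ 2 = 1)
  have hexp := hasDerivAt_exp_ofReal_mul_I (φ := fun r ↦ -s * r) (φ' := fun _ ↦ -s) (x := ρ)
    (by simpa using (hasDerivAt_id ρ).const_mul (-s))
  refine ((hexp.mul ((hasDerivAt_besselDeriv 0 ρ).ofReal_comp.sub
    ((hasDerivAt_besselDeriv 1 ρ).ofReal_comp.const_mul (s * Complex.I)))).div_const
      2).congr_deriv ?_
  simp only [besselAmpDeriv, Pi.sub_apply]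
  push_cast
  linear_combination (Complex.exp (-s * ρ * Complex.I) * besselDeriv 1 ρ / 2) *
    (s ^ 2 * Complex.I_sq - hs2)

lemma continuous_besselAmpDeriv (s : ℝ) : Continuous (besselAmpDeriv s) := by
  have h := continuous_besselDeriv
  unfold besselAmpDeriv
  fun_prop

lemma norm_besselAmp_le (hs : |s| = 1) (ρ : ℝ) :
    ‖besselAmp s ρ‖ ≤ (|besselDeriv 0 ρ| + |besselDeriv 1 ρ|) / 2 := by
  rw [besselAmp, norm_div, norm_mul, Complex.norm_exp_ofReal_mul_I, one_mul, Complex.norm_ofNat]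
  gcongr
  refine (norm_sub_le _ _).trans_eq ?_
  simp [hs]

/-- Bessel's equation turns `ρ (J₀ + J₀'')` into `-J₀'`. -/
lemma norm_mul_besselAmpDeriv (hs : |s| = 1) (ρ : ℝ) :
    ‖ρ * besselAmpDeriv s ρ‖ = |besselDeriv 1 ρ| / 2 := by
  calc ‖ρ * besselAmpDeriv s ρ‖ = |ρ * (besselDeriv 0 ρ + besselDeriv 2 ρ)| / 2 := by
        simp only [besselAmpDeriv, norm_mul, norm_div, Complex.norm_exp_ofReal_mul_I, norm_neg,
          Complex.norm_real, Real.norm_eq_abs, hs, Complex.norm_I, Complex.norm_ofNat, one_mul,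
          abs_mul]
        ring
    _ = |besselDeriv 1 ρ| / 2 := by rw [besselDeriv_ode, abs_neg]

/-- `B` is an amplitude on the dyadic interval `[1/2, 2]`: it is continuously differentiable with
derivative `B'`, vanishes at the right endpoint, and is bounded together with `B'` by `M`. -/
structure IsDyadicAmplitude (B B' : ℝ → ℂ) (M : ℝ) : Prop where
  hasDerivAt : ∀ x ∈ Set.Icc (1 / 2 : ℝ) 2, HasDerivAt B (B' x) x
  continuousOn_deriv : ContinuousOn B' (Set.Icc (1 / 2) 2)
  map_two : B 2 = 0
  norm_le : ∀ x ∈ Set.Icc (1 / 2 : ℝ) 2, ‖B x‖ ≤ M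
  norm_deriv_le : ∀ x ∈ Set.Icc (1 / 2 : ℝ) 2, ‖B' x‖ ≤ M

/-- `φ` is a phase on the dyadic interval `[1/2, 2]` that is uniformly increasing, with slope at
least `m`, and uniformly concave, with second derivative at most `-κ`. -/
structure IsConcavePhase (φ φ' φ'' : ℝ → ℝ) (m κ : ℝ) : Prop where
  hasDerivAt : ∀ x ∈ Set.Icc (1 / 2 : ℝ) 2, HasDerivAt φ (φ' x) x
  hasDerivAt_deriv : ∀ x ∈ Set.Icc (1 / 2 : ℝ) 2, HasDerivAt φ' (φ'' x) x
  continuousOn_deriv2 : ContinuousOn φ'' (Set.Icc (1 / 2) 2)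
  slope_pos : 0 < m
  slope_le : ∀ x ∈ Set.Icc (1 / 2 : ℝ) 2, m ≤ φ' x
  curvature_pos : 0 < κ
  deriv2_le : ∀ x ∈ Set.Icc (1 / 2 : ℝ) 2, φ'' x ≤ -κ

variable {M ρ m κ : ℝ} {B B' : ℝ → ℂ} {φ φ' φ'' : ℝ → ℝ}

lemma IsDyadicAmplitude.nonneg (hB : IsDyadicAmplitude B B' M) : 0 ≤ M :=
  (norm_nonneg _).trans (hB.norm_le 2 (by norm_num))

lemma IsDyadicAmplitude.norm_deriv_besselAmp_mul_le {x D : ℝ} (hB : IsDyadicAmplitude B B' M)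
    (hs : |s| = 1) (hx : x ∈ Set.Icc (1 / 2 : ℝ) 2)
    (hD : |besselDeriv 0 (ρ * x)| + |besselDeriv 1 (ρ * x)| ≤ D) :
    ‖ρ * besselAmpDeriv s (ρ * x) * B x + besselAmp s (ρ * x) * B' x‖ ≤ 3 / 2 * M * D := by
  have hM := hB.nonneg
  have ha' : ‖ρ * besselAmpDeriv s (ρ * x)‖ ≤ |besselDeriv 1 (ρ * x)| := by
    have h := norm_mul_besselAmpDeriv hs (ρ * x)
    rw [Complex.ofReal_mul, mul_right_comm, norm_mul, Complex.norm_real,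
      Real.norm_of_nonneg (by linarith [hx.1])] at h
    nlinarith [hx.1, norm_nonneg (ρ * besselAmpDeriv s (ρ * x))]
  calc _ ≤ |besselDeriv 1 (ρ * x)| * M +
        (|besselDeriv 0 (ρ * x)| + |besselDeriv 1 (ρ * x)|) / 2 * M :=
      norm_add_le_of_le (norm_mul_le_of_le ha' (hB.norm_le x hx))
        (norm_mul_le_of_le (norm_besselAmp_le hs _) (hB.norm_deriv_le x hx))
    _ ≤ D * M + D / 2 * M := by
      gcongr
      linarith [abs_nonneg (besselDeriv 0 (ρ * x))]
    _ = 3 / 2 * M * D := by ring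

lemma IsDyadicAmplitude.norm_integral_besselAmp_mul_le {D G : ℝ} {g : ℝ → ℂ}
    (hB : IsDyadicAmplitude B B' M) (hs : |s| = 1)
    (hD : ∀ x ∈ Set.Icc (1 / 2 : ℝ) 2,
      |besselDeriv 0 (ρ * x)| + |besselDeriv 1 (ρ * x)| ≤ D)
    (hg : ContinuousOn g (Set.Icc (1 / 2) 2))
    (hG : ∀ x ∈ Set.Icc (1 / 2 : ℝ) 2, ‖∫ y in (1 / 2)..x, g y‖ ≤ G) :
    ‖∫ x in (1 / 2)..2, besselAmp s (ρ * x) * B x * g x‖ ≤ 9 / 4 * M * D * G := by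
  have hamp : ∀ x ∈ Set.Icc (1 / 2 : ℝ) 2, HasDerivAt (fun x ↦ besselAmp s (ρ * x) * B x)
      (ρ * besselAmpDeriv s (ρ * x) * B x + besselAmp s (ρ * x) * B' x) x := fun x hx ↦ by
    have hscale := (hasDerivAt_besselAmp hs (ρ * x)).scomp x ((hasDerivAt_id x).const_mul ρ)
    exact (hscale.mul (hB.hasDerivAt x hx)).congr_deriv (by simp)
  have hamp_cont : ContinuousOn
      (fun x ↦ ρ * besselAmpDeriv s (ρ * x) * B x + besselAmp s (ρ * x) * B' x)
      (Set.Icc (1 / 2) 2) := by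
    have hB_cont : ContinuousOn B (Set.Icc (1 / 2) 2) :=
      fun x hx ↦ (hB.hasDerivAt x hx).continuousAt.continuousWithinAt
    have hB'_cont := hB.continuousOn_deriv
    have ha : Continuous (besselAmp s) :=
      continuous_iff_continuousAt.2 fun r ↦ (hasDerivAt_besselAmp hs r).continuousAt
    have ha' := continuous_besselAmpDeriv s
    fun_prop
  have h := norm_integral_mul_le_of_norm_primitive_le (by norm_num) hamp hamp_cont
    (by rw [hB.map_two, mul_zero])
    (fun x hx ↦ hB.norm_deriv_besselAmp_mul_le hs hx (hD x hx)) hg hG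
  linarith

lemma IsConcavePhase.hasDerivAt_add_mul {x : ℝ} (hφ : IsConcavePhase φ φ' φ'' m κ) (c : ℝ)
    (hx : x ∈ Set.Icc (1 / 2 : ℝ) 2) : HasDerivAt (fun x ↦ φ x + c * x) (φ' x + c) x :=
  ((hφ.hasDerivAt x hx).add ((hasDerivAt_id x).const_mul c)).congr_deriv (by simp)

lemma IsConcavePhase.continuousOn_exp (hφ : IsConcavePhase φ φ' φ'' m κ) (c : ℝ) :
    ContinuousOn (fun x ↦ Complex.exp ((φ x + c * x : ℝ) * Complex.I)) (Set.Icc (1 / 2) 2) :=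
  fun _ hx ↦ (hasDerivAt_exp_ofReal_mul_I (φ' := fun x ↦ φ' x + c)
    (hφ.hasDerivAt_add_mul c hx)).continuousAt.continuousWithinAt

lemma norm_integral_besselAmp_mul_exp_le_of_le (hB : IsDyadicAmplitude B B' M)
    (hφ : IsConcavePhase φ φ' φ'' m κ) (hs : |s| = 1) (hρ : |ρ| ≤ m / 2) :
    ‖∫ x in (1 / 2)..2, besselAmp s (ρ * x) * B x *
      Complex.exp ((φ x + s * ρ * x : ℝ) * Complex.I)‖ ≤ 72 * Real.pi * M * (1 / m) := by
  have hm := hφ.slope_pos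
  have hprim : ∀ x ∈ Set.Icc (1 / 2 : ℝ) 2,
      ‖∫ y in (1 / 2)..x, Complex.exp ((φ y + s * ρ * y : ℝ) * Complex.I)‖ ≤ 4 / (m / 2) := by
    intro x hx
    have hsub : Set.Icc (1 / 2) x ⊆ Set.Icc (1 / 2) 2 := Set.Icc_subset_Icc_right hx.2
    refine norm_integral_exp_le_of_le_abs_deriv hx.1
      (fun y hy ↦ hφ.hasDerivAt_add_mul _ (hsub hy))
      (fun y hy ↦ (hφ.hasDerivAt_deriv y (hsub hy)).add_const _)
      (hφ.continuousOn_deriv2.mono hsub)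
      (fun y hy ↦ by linarith [hφ.deriv2_le y (hsub hy), hφ.curvature_pos]) (by positivity)
      fun y hy ↦ ?_
    have hsρ : |s * ρ| ≤ m / 2 := by rwa [abs_mul, hs, one_mul]
    linarith [le_abs_self (φ' y + s * ρ), neg_abs_le (s * ρ), hφ.slope_le y (hsub hy)]
  calc _ ≤ 9 / 4 * M * (2 * Real.pi + 2 * Real.pi) * (4 / (m / 2)) :=
        hB.norm_integral_besselAmp_mul_le hs
          (fun x _ ↦ add_le_add (abs_besselDeriv_le 0 _) (abs_besselDeriv_le 1 _))
          (hφ.continuousOn_exp _) hprim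
    _ = 72 * Real.pi * M * (1 / m) := by ring

lemma norm_integral_besselAmp_mul_exp_le_of_ge (hB : IsDyadicAmplitude B B' M)
    (hφ : IsConcavePhase φ φ' φ'' m κ) (hs : |s| = 1) (hρ : m / 2 ≤ ρ) :
    ‖∫ x in (1 / 2)..2, besselAmp s (ρ * x) * B x *
      Complex.exp ((φ x + s * ρ * x : ℝ) * Complex.I)‖ ≤
      360 * Real.pi * M * (1 / √(m * κ)) := by
  have hm := hφ.slope_pos
  have hdecay : ∀ x ∈ Set.Icc (1 / 2 : ℝ) 2,
      |besselDeriv 0 (ρ * x)| + |besselDeriv 1 (ρ * x)| ≤ 8 * Real.pi / (√m / 2) := fun x hx ↦ by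
    have hlow : m / 4 ≤ ρ * x := by nlinarith [hx.1]
    have hsqrt : √m / 2 = √(m / 4) := by
      rw [Real.sqrt_div hm.le, show (4 : ℝ) = 2 ^ 2 by norm_num, Real.sqrt_sq two_pos.le]
    refine (abs_bessel_add_abs_deriv_le (by linarith)).trans ?_
    rw [hsqrt]
    gcongr
  have hprim : ∀ x ∈ Set.Icc (1 / 2 : ℝ) 2,
      ‖∫ y in (1 / 2)..x, Complex.exp ((φ y + s * ρ * y : ℝ) * Complex.I)‖ ≤ 10 / √κ := by
    intro x hx
    have hsub : Set.Icc (1 / 2) x ⊆ Set.Icc (1 / 2) 2 := Set.Icc_subset_Icc_right hx.2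
    exact norm_integral_exp_le_of_deriv2_le_neg hx.1
      (fun y hy ↦ hφ.hasDerivAt_add_mul _ (hsub hy))
      (fun y hy ↦ (hφ.hasDerivAt_deriv y (hsub hy)).add_const _)
      (hφ.continuousOn_deriv2.mono hsub) hφ.curvature_pos fun y hy ↦ hφ.deriv2_le y (hsub hy)
  calc _ ≤ 9 / 4 * M * (8 * Real.pi / (√m / 2)) * (10 / √κ) :=
        hB.norm_integral_besselAmp_mul_le hs hdecay (hφ.continuousOn_exp _) hprim
    _ = 360 * Real.pi * M * (1 / √(m * κ)) := by rw [Real.sqrt_mul hm.le]; ring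

/-- For `ρ ≤ m / 2` the phase `φ x + s ρ x` has no stationary point; for larger `ρ` it may have
one, and then the decay of the Bessel function makes up for it. -/
lemma norm_integral_besselAmp_mul_exp_le (hB : IsDyadicAmplitude B B' M)
    (hφ : IsConcavePhase φ φ' φ'' m κ) (hs : |s| = 1) (hρ : 0 ≤ ρ) :
    ‖∫ x in (1 / 2)..2, besselAmp s (ρ * x) * B x *
      Complex.exp ((φ x + s * ρ * x : ℝ) * Complex.I)‖ ≤
      360 * Real.pi * M * (1 / m + 1 / √(m * κ)) := by
  have hM := hB.nonneg
  have hm := hφ.slope_pos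
  have hm' : 0 ≤ Real.pi * M * (1 / m) := by positivity
  have hκ' : 0 ≤ Real.pi * M * (1 / √(m * κ)) := by positivity
  rcases le_total ρ (m / 2) with h | h
  · linarith [norm_integral_besselAmp_mul_exp_le_of_le hB hφ hs (by rwa [abs_of_nonneg hρ])]
  · linarith [norm_integral_besselAmp_mul_exp_le_of_ge hB hφ hs h]

theorem norm_integral_bessel_mul_exp_le (hB : IsDyadicAmplitude B B' M)
    (hφ : IsConcavePhase φ φ' φ'' m κ) (hρ : 0 ≤ ρ) :
    ‖∫ x in (1 / 2)..2, besselDeriv 0 (ρ * x) * B x * Complex.exp (φ x * Complex.I)‖ ≤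
      720 * Real.pi * M * (1 / m + 1 / √(m * κ)) := by
  have hwave : ∀ s, |s| = 1 → IntervalIntegrable (fun x ↦ besselAmp s (ρ * x) * B x *
      Complex.exp ((φ x + s * ρ * x : ℝ) * Complex.I)) volume (1 / 2) 2 := fun s hs ↦ by
    refine ContinuousOn.intervalIntegrable_of_Icc (by norm_num) fun x hx ↦ ?_
    have hamp : ContinuousAt (fun x ↦ besselAmp s (ρ * x)) x :=
      (hasDerivAt_besselAmp hs (ρ * x)).continuousAt.comp (f := fun x ↦ ρ * x) (by fun_prop)
    have hBx := (hB.hasDerivAt x hx).continuousAt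
    exact (hamp.mul hBx).continuousWithinAt.mul (hφ.continuousOn_exp _ x hx)
  have hsplit : ∀ x, besselDeriv 0 (ρ * x) * B x * Complex.exp (φ x * Complex.I) =
      besselAmp 1 (ρ * x) * B x * Complex.exp ((φ x + 1 * ρ * x : ℝ) * Complex.I) +
        besselAmp (-1) (ρ * x) * B x * Complex.exp ((φ x + -1 * ρ * x : ℝ) * Complex.I) := by
    intro x
    rw [besselDeriv_zero_eq_waves]
    simp only [Complex.ofReal_add, add_mul, Complex.exp_add, mul_assoc _ ρ x]
    ring
  simp only [hsplit]
  rw [intervalIntegral.integral_add (hwave 1 (by simp)) (hwave (-1) (by simp))]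
  refine (norm_add_le_of_le
    (norm_integral_besselAmp_mul_exp_le hB hφ (s := 1) (by simp) hρ)
    (norm_integral_besselAmp_mul_exp_le hB hφ (s := -1) (by simp) hρ)).trans_eq (by ring)

end BesselOscillatory

/-! ### The dispersion relation `√(r tanh r)` -/

section Dispersion

lemma hasDerivAt_tanh (r : ℝ) : HasDerivAt Real.tanh (1 - Real.tanh r ^ 2) r := by
  have hcosh : Real.cosh r ≠ 0 := (Real.cosh_pos r).ne'
  rw [show Real.tanh = fun x ↦ Real.sinh x / Real.cosh x from funext Real.tanh_eq_sinh_div_cosh]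
  refine ((Real.hasDerivAt_sinh r).div (Real.hasDerivAt_cosh r) hcosh).congr_deriv ?_
  field_simp

lemma continuous_tanh : Continuous Real.tanh :=
  continuous_iff_continuousAt.2 fun r ↦ (hasDerivAt_tanh r).continuousAt

lemma tanh_le_self {r : ℝ} (hr : 0 ≤ r) : Real.tanh r ≤ r := by
  have hmono : Monotone fun x ↦ x - Real.tanh x :=
    monotone_of_hasDerivAt_nonneg (f' := fun x ↦ Real.tanh x ^ 2)
      (fun x ↦ ((hasDerivAt_id' x).sub (hasDerivAt_tanh x)).congr_deriv (by ring))
      fun x ↦ sq_nonneg _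
  simpa using hmono hr

lemma div_one_add_le_tanh {r : ℝ} (hr : 0 ≤ r) : r / (1 + r) ≤ Real.tanh r := by
  have hexp : (1 + 2 * r) * Real.exp (-r) ≤ Real.exp r :=
    calc (1 + 2 * r) * Real.exp (-r) ≤ Real.exp (2 * r) * Real.exp (-r) := by
          gcongr
          linarith [Real.add_one_le_exp (2 * r)]
      _ = Real.exp r := by rw [← Real.exp_add]; ring_nf
  rw [Real.tanh_eq, div_le_div_iff₀ (by linarith) (by positivity)]
  linarith

lemma tanh_pos {r : ℝ} (hr : 0 < r) : 0 < Real.tanh r :=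
  (by positivity : 0 < r / (1 + r)).trans_le (div_one_add_le_tanh hr.le)

/-- The dispersion relation `ω(r) = √(r tanh r)` of the multiplier `m₂`. -/
def dispersion (r : ℝ) : ℝ := √(r * Real.tanh r)

/-- The derivative `ω'` of the dispersion relation on the positive half-line. -/
def dispersionDeriv (r : ℝ) : ℝ :=
  (Real.tanh r + r * (1 - Real.tanh r ^ 2)) / (2 * dispersion r)

/-- The second derivative `ω''` of the dispersion relation on the positive half-line. -/
def dispersionDeriv2 (r : ℝ) : ℝ :=
  -(((Real.tanh r - r * (1 - Real.tanh r ^ 2)) ^ 2 +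
    4 * r ^ 2 * Real.tanh r ^ 2 * (1 - Real.tanh r ^ 2)) / (4 * dispersion r ^ 3))

lemma continuous_dispersion : Continuous dispersion :=
  (continuous_id.mul continuous_tanh).sqrt

variable {r : ℝ}

lemma dispersion_pos (hr : 0 < r) : 0 < dispersion r :=
  Real.sqrt_pos.2 (mul_pos hr (tanh_pos hr))

lemma dispersion_sq (hr : 0 < r) : dispersion r ^ 2 = r * Real.tanh r :=
  Real.sq_sqrt (mul_pos hr (tanh_pos hr)).le

lemma hasDerivAt_dispersion (hr : 0 < r) : HasDerivAt dispersion (dispersionDeriv r) r :=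
  (((hasDerivAt_id' r).fun_mul (hasDerivAt_tanh r)).sqrt
    (mul_pos hr (tanh_pos hr)).ne').congr_deriv (by rw [one_mul]; rfl)

lemma hasDerivAt_dispersionDeriv (hr : 0 < r) :
    HasDerivAt dispersionDeriv (dispersionDeriv2 r) r := by
  have hω := dispersion_pos hr
  have hnum := (hasDerivAt_tanh r).fun_add
    ((hasDerivAt_id' r).fun_mul (((hasDerivAt_tanh r).fun_pow 2).const_sub 1))
  refine (hnum.fun_div ((hasDerivAt_dispersion hr).const_mul 2)
    (by positivity)).congr_deriv ?_
  rw [dispersionDeriv2, dispersionDeriv]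
  field_simp
  rw [dispersion_sq hr]
  ring

lemma continuousOn_dispersionDeriv2 : ContinuousOn dispersionDeriv2 (Set.Ioi 0) := by
  have htanh := continuous_tanh
  have hω := continuous_dispersion
  have hne : ∀ r ∈ Set.Ioi (0 : ℝ), 4 * dispersion r ^ 3 ≠ 0 := fun r hr ↦
    mul_ne_zero four_ne_zero (pow_ne_zero 3 (dispersion_pos hr).ne')
  unfold dispersionDeriv2
  fun_prop (disch := assumption)

lemma le_dispersionDeriv (hr : 0 < r) : 1 / (2 * √(1 + r)) ≤ dispersionDeriv r := by
  have htanh := tanh_pos hr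
  have hsech : 0 ≤ 1 - Real.tanh r ^ 2 := sub_nonneg.2 (Real.tanh_sq_lt_one r).le
  have hω : dispersion r ≤ Real.tanh r * √(1 + r) := by
    rw [dispersion, Real.sqrt_le_left (by positivity), mul_pow, Real.sq_sqrt (by positivity)]
    have := (div_le_iff₀ (by positivity)).1 (div_one_add_le_tanh hr.le)
    nlinarith
  rw [dispersionDeriv, div_le_div_iff₀ (by positivity) (mul_pos two_pos (dispersion_pos hr))]
  have hsech_term := mul_nonneg (mul_nonneg hr.le hsech) (Real.sqrt_nonneg (1 + r))
  nlinarith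

/-- Either `r sech² r` is at most half of `tanh r`, and the first square is large, or it is not,
and the second term is large. -/
lemma le_dispersionDeriv2_numerator (hr : 0 < r) :
    (r / (1 + r)) ^ 4 / 4 ≤ (Real.tanh r - r * (1 - Real.tanh r ^ 2)) ^ 2 +
      4 * r ^ 2 * Real.tanh r ^ 2 * (1 - Real.tanh r ^ 2) := by
  have hlow := div_one_add_le_tanh hr.le
  have htanh := tanh_pos hr
  set T := Real.tanh r
  set S := 1 - T ^ 2
  have hS : 0 ≤ S := sub_nonneg.2 (Real.tanh_sq_lt_one r).le
  set q := r / (1 + r)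
  have hq : 0 ≤ q := by positivity
  have hq_one : q ≤ 1 := (div_le_one (by linarith)).2 (by linarith)
  have hqr : q ≤ r := div_le_self hr.le (by linarith)
  rcases le_total (r * S) (T / 2) with h | h
  · calc q ^ 4 / 4 ≤ q ^ 2 / 4 := by
          gcongr ?_ / 4
          exact pow_le_pow_of_le_one hq hq_one (by norm_num)
      _ = (q / 2) ^ 2 := by ring
      _ ≤ (T - r * S) ^ 2 := by gcongr; linarith
      _ ≤ (T - r * S) ^ 2 + 4 * r ^ 2 * T ^ 2 * S := le_add_of_nonneg_right (by positivity)
  · calc q ^ 4 / 4 = q ^ 1 * q ^ 3 / 4 := by ring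
      _ ≤ r ^ 1 * T ^ 3 / 4 := by gcongr
      _ ≤ 4 * r * T ^ 2 * (T / 2) := by nlinarith [mul_pos hr (pow_pos htanh 3)]
      _ ≤ 4 * r * T ^ 2 * (r * S) := by gcongr
      _ ≤ (T - r * S) ^ 2 + 4 * r ^ 2 * T ^ 2 * S := by linarith [sq_nonneg (T - r * S)]

lemma dispersion_le (hr : 0 < r) : dispersion r ≤ 2 * (r / √(1 + r)) := by
  have hupper : Real.tanh r * (1 + r) ≤ 2 * r := by
    nlinarith [tanh_le_self hr.le, Real.tanh_lt_one r]
  rw [dispersion, Real.sqrt_le_left (by positivity), mul_pow, div_pow,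
    Real.sq_sqrt (by positivity), ← mul_div_assoc, le_div_iff₀ (by positivity)]
  nlinarith [sq_nonneg r]

lemma dispersionDeriv2_le (hr : 0 < r) : dispersionDeriv2 r ≤ -(r / (128 * √(1 + r) ^ 5)) := by
  have hω := dispersion_pos hr
  rw [dispersionDeriv2, neg_le_neg_iff]
  calc r / (128 * √(1 + r) ^ 5)
      = (r / √(1 + r) ^ 2) ^ 4 / 4 / (4 * (2 * (r / √(1 + r))) ^ 3) := by field_simp; norm_num
    _ ≤ _ := by
        have hnum := le_dispersionDeriv2_numerator hr
        gcongr
        · exact (by positivity : 0 ≤ (r / (1 + r)) ^ 4 / 4).trans hnum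
        · rwa [Real.sq_sqrt (by linarith)]
        · exact dispersion_le hr

lemma isConcavePhase_dispersion {s Λ : ℝ} (hs : 0 < s) (hΛ : 0 < Λ) :
    IsConcavePhase (fun x ↦ s * dispersion (Λ * x)) (fun x ↦ s * (Λ * dispersionDeriv (Λ * x)))
      (fun x ↦ s * (Λ ^ 2 * dispersionDeriv2 (Λ * x))) (s * Λ / (4 * √(1 + Λ)))
      (s * Λ ^ 3 / (16384 * √(1 + Λ) ^ 5)) := by
  have hv : 0 < √(1 + Λ) := Real.sqrt_pos.2 (by linarith)
  have hpos : ∀ x ∈ Set.Icc (1 / 2 : ℝ) 2, 0 < Λ * x := fun x hx ↦ mul_pos hΛ (by linarith [hx.1])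
  have hsqrt : ∀ x ∈ Set.Icc (1 / 2 : ℝ) 2, √(1 + Λ * x) ≤ 2 * √(1 + Λ) := fun x hx ↦ by
    rw [Real.sqrt_le_left (by positivity), mul_pow, Real.sq_sqrt (by linarith)]
    nlinarith [hx.2]
  have hscale : ∀ x, HasDerivAt (fun x ↦ Λ * x) Λ x := fun x ↦ by
    simpa using (hasDerivAt_id x).const_mul Λ
  refine ⟨fun x hx ↦ ?_, fun x hx ↦ ?_, ?_, by positivity, fun x hx ↦ ?_, by positivity,
    fun x hx ↦ ?_⟩
  · refine (((hasDerivAt_dispersion (hpos x hx)).comp x (hscale x)).const_mul s).congr_deriv ?_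
    ring
  · refine ((((hasDerivAt_dispersionDeriv (hpos x hx)).comp x (hscale x)).const_mul Λ).const_mul
      s).congr_deriv ?_
    ring
  · exact continuousOn_const.mul (continuousOn_const.mul
      (continuousOn_dispersionDeriv2.comp (by fun_prop) hpos))
  · calc s * Λ / (4 * √(1 + Λ)) = s * (Λ * (1 / (2 * (2 * √(1 + Λ))))) := by ring
      _ ≤ s * (Λ * (1 / (2 * √(1 + Λ * x)))) := by
        have := hpos x hx
        gcongr
        exact hsqrt x hx
      _ ≤ s * (Λ * dispersionDeriv (Λ * x)) := by
        gcongr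
        exact le_dispersionDeriv (hpos x hx)
  · have hx_pos := hpos x hx
    have hcurv : Λ * (1 / 2) / (128 * (2 * √(1 + Λ)) ^ 5) ≤ Λ * x / (128 * √(1 + Λ * x) ^ 5) := by
      gcongr
      exacts [hx.1, hsqrt x hx]
    calc s * (Λ ^ 2 * dispersionDeriv2 (Λ * x))
        ≤ s * (Λ ^ 2 * -(Λ * (1 / 2) / (128 * (2 * √(1 + Λ)) ^ 5))) := by
          gcongr
          exact (dispersionDeriv2_le hx_pos).trans (neg_le_neg hcurv)
      _ ≤ -(s * Λ ^ 3 / (16384 * √(1 + Λ) ^ 5)) := by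
          rw [← sub_nonneg]
          field_simp
          norm_num
          positivity

variable {M ρ s Λ : ℝ} {B B' : ℝ → ℂ}

lemma IsDyadicAmplitude.conj (hB : IsDyadicAmplitude B B' M) :
    IsDyadicAmplitude (fun x ↦ starRingEnd ℂ (B x)) (fun x ↦ starRingEnd ℂ (B' x)) M where
  hasDerivAt x hx := (hB.hasDerivAt x hx).star
  continuousOn_deriv := Complex.continuous_conj.comp_continuousOn hB.continuousOn_deriv
  map_two := by rw [hB.map_two, map_zero]
  norm_le x hx := by rw [Complex.norm_conj]; exact hB.norm_le x hx
  norm_deriv_le x hx := by rw [Complex.norm_conj]; exact hB.norm_deriv_le x hx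

lemma norm_integral_bessel_mul_exp_dispersion_le_of_pos (hB : IsDyadicAmplitude B B' M)
    (hs : 0 < s) (hΛ : 0 < Λ) (hρ : 0 ≤ ρ) :
    ‖∫ x in (1 / 2)..2, besselDeriv 0 (ρ * x) * B x *
      Complex.exp ((s * dispersion (Λ * x) : ℝ) * Complex.I)‖ ≤
      187200 * Real.pi * M * (√(1 + Λ) ^ 3 / (s * Λ ^ 2)) := by
  have hM := hB.nonneg
  have hv_sq : √(1 + Λ) ^ 2 = 1 + Λ := Real.sq_sqrt (by linarith)
  have hcurvature : √(s * Λ / (4 * √(1 + Λ)) * (s * Λ ^ 3 / (16384 * √(1 + Λ) ^ 5))) =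
      s * Λ ^ 2 / (256 * √(1 + Λ) ^ 3) := by
    rw [Real.sqrt_eq_iff_mul_self_eq (by positivity) (by positivity)]
    field_simp
    norm_num
  have hslope : 1 / (s * Λ / (4 * √(1 + Λ))) ≤ 4 * (√(1 + Λ) ^ 3 / (s * Λ ^ 2)) :=
    calc 1 / (s * Λ / (4 * √(1 + Λ))) = 4 * (√(1 + Λ) * Λ / (s * Λ ^ 2)) := by field_simp
      _ ≤ 4 * (√(1 + Λ) * √(1 + Λ) ^ 2 / (s * Λ ^ 2)) := by gcongr; linarith
      _ = 4 * (√(1 + Λ) ^ 3 / (s * Λ ^ 2)) := by ring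
  calc _ ≤ 720 * Real.pi * M * (1 / (s * Λ / (4 * √(1 + Λ))) +
        1 / (s * Λ ^ 2 / (256 * √(1 + Λ) ^ 3))) := by
        rw [← hcurvature]
        exact norm_integral_bessel_mul_exp_le hB (isConcavePhase_dispersion hs hΛ) hρ
    _ ≤ 720 * Real.pi * M * (4 * (√(1 + Λ) ^ 3 / (s * Λ ^ 2)) +
        256 * (√(1 + Λ) ^ 3 / (s * Λ ^ 2))) := by
        gcongr
        exact (by field_simp : _ = _).le
    _ = 187200 * Real.pi * M * (√(1 + Λ) ^ 3 / (s * Λ ^ 2)) := by ring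

theorem norm_integral_bessel_mul_exp_dispersion_le (hB : IsDyadicAmplitude B B' M)
    (hs : s ≠ 0) (hΛ : 0 < Λ) (hρ : 0 ≤ ρ) :
    ‖∫ x in (1 / 2)..2, besselDeriv 0 (ρ * x) * B x *
      Complex.exp ((s * dispersion (Λ * x) : ℝ) * Complex.I)‖ ≤
      187200 * Real.pi * M * (√(1 + Λ) ^ 3 / (|s| * Λ ^ 2)) := by
  rcases hs.lt_or_gt with hneg | hpos
  · have hconj : ∀ x, starRingEnd ℂ (besselDeriv 0 (ρ * x) * B x *
        Complex.exp ((s * dispersion (Λ * x) : ℝ) * Complex.I)) =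
        besselDeriv 0 (ρ * x) * starRingEnd ℂ (B x) *
          Complex.exp ((-s * dispersion (Λ * x) : ℝ) * Complex.I) := fun x ↦ by
      simp only [map_mul, ← Complex.exp_conj, Complex.conj_ofReal, Complex.conj_I]
      push_cast
      ring_nf
    rw [abs_of_neg hneg, ← Complex.norm_conj, ← intervalIntegral.intervalIntegral_conj]
    simp only [hconj]
    exact norm_integral_bessel_mul_exp_dispersion_le_of_pos hB.conj (neg_pos.2 hneg) hΛ hρ
  · rw [abs_of_pos hpos]
    exact norm_integral_bessel_mul_exp_dispersion_le_of_pos hB hpos hΛ hρ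

end Dispersion

/-! ### Radial Fourier transforms in the plane -/

section Radial

lemma intervalIntegral_comp_add_of_periodic {E : Type*} [NormedAddCommGroup E] [NormedSpace ℝ E]
    {F : ℝ → E} (hF : Function.Periodic F (2 * Real.pi)) (α : ℝ) :
    ∫ θ in -Real.pi..Real.pi, F (θ + α) = ∫ θ in -Real.pi..Real.pi, F θ := by
  have hshift := hF.intervalIntegral_add_eq (-Real.pi + α) (-Real.pi)
  rw [intervalIntegral.integral_comp_add_right F α]
  convert hshift using 2 <;> ring

lemma integral_exp_mul_cos_sub (ρ α : ℝ) :
    ∫ θ in -Real.pi..Real.pi, Complex.exp ((ρ * Real.cos (θ - α) : ℝ) * Complex.I) =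
      besselDeriv 0 ρ := by
  have hodd : ∫ θ in -Real.pi..Real.pi, Real.sin (ρ * Real.cos θ) = 0 := by
    have hshift := intervalIntegral_comp_add_of_periodic
      (F := fun θ ↦ Real.sin (ρ * Real.cos θ)) (fun θ ↦ by simp only [Real.cos_add_two_pi])
      Real.pi
    simp only [Real.cos_add_pi, mul_neg, Real.sin_neg, intervalIntegral.integral_neg] at hshift
    linarith
  have heuler : ∀ θ : ℝ, Complex.exp ((ρ * Real.cos θ : ℝ) * Complex.I) =
      (Real.cos (ρ * Real.cos θ) : ℂ) + (Real.sin (ρ * Real.cos θ) : ℂ) * Complex.I := fun θ ↦ by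
    rw [Complex.exp_mul_I, Complex.ofReal_cos, Complex.ofReal_sin]
  calc ∫ θ in -Real.pi..Real.pi, Complex.exp ((ρ * Real.cos (θ - α) : ℝ) * Complex.I)
      = ∫ θ in -Real.pi..Real.pi, Complex.exp ((ρ * Real.cos θ : ℝ) * Complex.I) :=
        intervalIntegral_comp_add_of_periodic
          (F := fun θ ↦ Complex.exp ((ρ * Real.cos θ : ℝ) * Complex.I))
          (fun θ ↦ by simp only [Real.cos_add_two_pi]) (-α)
    _ = (∫ θ in -Real.pi..Real.pi, Real.cos (ρ * Real.cos θ) : ℝ) +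
          (∫ θ in -Real.pi..Real.pi, Real.sin (ρ * Real.cos θ) : ℝ) * Complex.I := by
        simp only [heuler]
        rw [intervalIntegral.integral_add (Continuous.intervalIntegrable (by fun_prop) _ _)
          (Continuous.intervalIntegrable (by fun_prop) _ _), intervalIntegral.integral_mul_const,
          intervalIntegral.integral_ofReal, intervalIntegral.integral_ofReal]
    _ = besselDeriv 0 ρ := by simp [hodd, besselDeriv]

lemma integral_eq_integral_polar {E : Type*} [NormedAddCommGroup E] [NormedSpace ℝ E]
    (G : E2 → E) :
    ∫ ξ, G ξ = ∫ p in Set.Ioi (0 : ℝ) ×ˢ Set.Ioo (-Real.pi) Real.pi,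
      p.1 • G !₂[p.1 * Real.cos p.2, p.1 * Real.sin p.2] := by
  calc ∫ ξ, G ξ = ∫ x : Fin 2 → ℝ, G (WithLp.toLp 2 x) :=
        ((PiLp.volume_preserving_toLp (Fin 2)).integral_comp
          (MeasurableEquiv.toLp 2 (Fin 2 → ℝ)).measurableEmbedding G).symm
    _ = ∫ p : ℝ × ℝ, G !₂[p.1, p.2] :=
        ((volume_preserving_finTwoArrow ℝ).symm.integral_comp
          (MeasurableEquiv.finTwoArrow (α := ℝ)).symm.measurableEmbedding _).symm
    _ = _ := (integral_comp_polarCoord_symm _).symm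

lemma norm_polar {r : ℝ} (hr : 0 ≤ r) (θ : ℝ) :
    ‖(!₂[r * Real.cos θ, r * Real.sin θ] : E2)‖ = r := by
  rw [EuclideanSpace.norm_eq, Real.sqrt_eq_iff_mul_self_eq (by positivity) hr]
  simp only [Fin.sum_univ_two, Real.norm_eq_abs, sq_abs, Matrix.cons_val_zero, Matrix.cons_val_one]
  linear_combination r ^ 2 * Real.cos_sq_add_sin_sq θ

lemma exists_inner_polar_eq (w : E2) :
    ∃ α, ∀ r θ, inner ℝ !₂[r * Real.cos θ, r * Real.sin θ] w = r * ‖w‖ * Real.cos (θ - α) := by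
  have hnorm : ‖w‖ = ‖(⟨w 0, w 1⟩ : ℂ)‖ := by
    rw [EuclideanSpace.norm_eq, Complex.norm_def, Complex.normSq_apply]
    simp [Fin.sum_univ_two, sq]
  refine ⟨Complex.arg ⟨w 0, w 1⟩, fun r θ ↦ ?_⟩
  have hcos := Complex.norm_mul_cos_arg ⟨w 0, w 1⟩
  have hsin := Complex.norm_mul_sin_arg ⟨w 0, w 1⟩
  rw [PiLp.inner_apply, Fin.sum_univ_two, Real.cos_sub, hnorm]
  simp only [Matrix.cons_val_zero, Matrix.cons_val_one, RCLike.inner_apply, conj_trivial]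
  linear_combination -r * Real.cos θ * hcos - r * Real.sin θ * hsin

theorem fourierInv_radial {h : ℝ → ℂ} (hh : IntegrableOn (fun r : ℝ ↦ r * h r) (Set.Ioi 0))
    (y : E2) :
    𝓕⁻ (fun ξ : E2 ↦ h ‖ξ‖) y =
      ∫ r in Set.Ioi (0 : ℝ), besselDeriv 0 (2 * Real.pi * ‖y‖ * r) * (r * h r) := by
  obtain ⟨α, hα⟩ := exists_inner_polar_eq y
  have hpolar : Set.EqOn
      (fun p : ℝ × ℝ ↦ p.1 • (Complex.exp ((2 * Real.pi *
        inner ℝ (!₂[p.1 * Real.cos p.2, p.1 * Real.sin p.2] : E2) y : ℝ) * Complex.I) •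
          h ‖(!₂[p.1 * Real.cos p.2, p.1 * Real.sin p.2] : E2)‖))
      (fun p ↦ (p.1 * h p.1) * Complex.exp
        ((2 * Real.pi * ‖y‖ * p.1 * Real.cos (p.2 - α) : ℝ) * Complex.I))
      (Set.Ioi 0 ×ˢ Set.Ioo (-Real.pi) Real.pi) := fun p hp ↦ by
    simp only [norm_polar (Set.mem_Ioi.1 hp.1).le, hα, Complex.real_smul, smul_eq_mul]
    ring_nf
  have hint : IntegrableOn (fun p : ℝ × ℝ ↦ (p.1 * h p.1) * Complex.exp
      ((2 * Real.pi * ‖y‖ * p.1 * Real.cos (p.2 - α) : ℝ) * Complex.I))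
      (Set.Ioi 0 ×ˢ Set.Ioo (-Real.pi) Real.pi) := by
    have hone : IntegrableOn (fun _ : ℝ ↦ (1 : ℂ)) (Set.Ioo (-Real.pi) Real.pi) :=
      integrableOn_const (by simp)
    have hprod := (hh.mul_prod hone).mul_bdd (c := 1)
      (g := fun p : ℝ × ℝ ↦ Complex.exp
        ((2 * Real.pi * ‖y‖ * p.1 * Real.cos (p.2 - α) : ℝ) * Complex.I))
      (Continuous.aestronglyMeasurable (by fun_prop))
      (.of_forall fun p ↦ (Complex.norm_exp_ofReal_mul_I _).le)
    simpa only [IntegrableOn, Measure.volume_eq_prod, Measure.prod_restrict, mul_one] using hprod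
  rw [Real.fourierInv_eq', integral_eq_integral_polar,
    setIntegral_congr_fun (measurableSet_Ioi.prod measurableSet_Ioo) hpolar,
    Measure.volume_eq_prod, setIntegral_prod _ hint]
  refine setIntegral_congr_fun measurableSet_Ioi fun r _ ↦ ?_
  have hangle := integral_exp_mul_cos_sub (2 * Real.pi * ‖y‖ * r) α
  rw [intervalIntegral.integral_of_le (by linarith [Real.pi_pos]),
    integral_Ioc_eq_integral_Ioo] at hangle
  simp only [integral_const_mul, hangle]
  ring

theorem fourierInv_dyadic_radial {H : ℝ → ℂ} (hcont : ContinuousOn H (Set.Icc (1 / 2) 2))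
    (hsupp : ∀ x, 0 < x → x ∉ Set.Icc (1 / 2 : ℝ) 2 → H x = 0) {lam : ℝ} (hlam : 0 < lam)
    (y : E2) :
    𝓕⁻ (fun ξ : E2 ↦ H (‖ξ‖ / lam)) y =
      lam ^ 2 * ∫ x in (1 / 2)..2, besselDeriv 0 (2 * Real.pi * ‖y‖ * lam * x) * (x * H x) := by
  have hsub : Set.Icc (1 / 2 : ℝ) 2 ⊆ Set.Ioi 0 := fun x hx ↦ one_half_pos.trans_le hx.1
  have hint : IntegrableOn (fun x : ℝ ↦ x * H x) (Set.Ioi 0) :=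
    (Complex.continuous_ofReal.continuousOn.fun_mul hcont).integrableOn_Icc
      |>.of_forall_sdiff_eq_zero measurableSet_Ioi fun x hx ↦ by rw [hsupp x hx.1 hx.2, mul_zero]
  have hscale : ∀ x : ℝ, ((lam * x : ℝ) : ℂ) * H (lam * x / lam) = lam * (x * H x) := fun x ↦ by
    rw [mul_div_cancel_left₀ x hlam.ne', Complex.ofReal_mul, mul_assoc]
  have hint_scaled : IntegrableOn (fun r : ℝ ↦ r * H (r / lam)) (Set.Ioi 0) := by
    rw [← mul_zero lam, ← integrableOn_Ioi_comp_mul_left_iff _ _ hlam]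
    simp only [hscale]
    exact hint.const_mul _
  calc 𝓕⁻ (fun ξ : E2 ↦ H (‖ξ‖ / lam)) y
      = ∫ r in Set.Ioi (lam * 0),
          besselDeriv 0 (2 * Real.pi * ‖y‖ * r) * (r * H (r / lam)) := by
        rw [mul_zero]
        exact fourierInv_radial hint_scaled y
    _ = lam * ∫ x in Set.Ioi (0 : ℝ),
          besselDeriv 0 (2 * Real.pi * ‖y‖ * (lam * x)) * (lam * (x * H x)) := by
        rw [← integral_comp_mul_left_Ioi' _ _ hlam, Complex.real_smul]
        simp only [hscale]
    _ = lam ^ 2 * ∫ x in Set.Ioi (0 : ℝ),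
          besselDeriv 0 (2 * Real.pi * ‖y‖ * lam * x) * (x * H x) := by
        simp only [mul_left_comm _ (lam : ℂ), integral_const_mul]
        ring_nf
    _ = lam ^ 2 * ∫ x in (1 / 2)..2,
          besselDeriv 0 (2 * Real.pi * ‖y‖ * lam * x) * (x * H x) := by
        rw [intervalIntegral.integral_of_le (by norm_num), ← integral_Icc_eq_integral_Ioc,
          setIntegral_eq_of_subset_of_forall_sdiff_eq_zero measurableSet_Ioi hsub]
        exact fun x hx ↦ by rw [hsupp x hx.1 hx.2, mul_zero, mul_zero]

end Radial

/-! ### The kernel of the frequency-localized propagator -/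

section Kernel

lemma m2_eq_dispersion (ξ : E2) : m2 ξ = dispersion ‖ξ‖ := by
  rw [m2, dispersion]
  split_ifs with h
  · simp [h]
  · rw [← Real.sqrt_sq (norm_nonneg ξ), ← Real.sqrt_mul (by positivity),
      Real.sqrt_sq (norm_nonneg ξ)]
    field_simp

/-- The symbol `e^{i(t/√μ) m₂(√μ ξ)}` of the propagator `S_{μ,2}(t)`. -/
def propSymbol (μ t : ℝ) (ξ : E2) : ℂ :=
  Complex.exp (Complex.I * ((t / √μ) * m2 (√μ • ξ) : ℝ))

lemma propSymbol_eq (μ t : ℝ) (ξ : E2) :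
    propSymbol μ t ξ = Complex.exp ((t / √μ * dispersion (√μ * ‖ξ‖) : ℝ) * Complex.I) := by
  rw [propSymbol, m2_eq_dispersion, norm_smul, Real.norm_of_nonneg (Real.sqrt_nonneg μ), mul_comm]

lemma continuous_propSymbol (μ t : ℝ) : Continuous (propSymbol μ t) := by
  have hω := continuous_dispersion
  simp only [funext (propSymbol_eq μ t)]
  fun_prop

variable {β : ℝ → ℝ}

lemma exists_isDyadicAmplitude (hβ : ContDiff ℝ 1 β) (htwo : β 2 = 0) :
    ∃ B' M, IsDyadicAmplitude (fun x ↦ x * β x) B' M := by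
  have hderiv : ∀ x : ℝ, HasDerivAt (fun x : ℝ ↦ (x * β x : ℂ)) (β x + x * deriv β x : ℂ) x := by
    intro x
    convert (((hasDerivAt_id' x).fun_mul
      (hβ.differentiable one_ne_zero x).hasDerivAt).ofReal_comp) using 1
    · simp
    · simp
  have hcont_deriv : Continuous fun x : ℝ ↦ (β x + x * deriv β x : ℂ) := by
    have := hβ.continuous
    have := hβ.continuous_deriv le_rfl
    fun_prop
  have hcont : Continuous fun x : ℝ ↦ (x * β x : ℂ) :=
    continuous_iff_continuousAt.2 fun x ↦ (hderiv x).continuousAt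
  obtain ⟨M₀, hM₀⟩ :=
    (isCompact_Icc (a := (1 / 2 : ℝ)) (b := 2)).exists_bound_of_continuousOn hcont.continuousOn
  obtain ⟨M₁, hM₁⟩ := (isCompact_Icc (a := (1 / 2 : ℝ)) (b := 2)).exists_bound_of_continuousOn
    hcont_deriv.continuousOn
  exact ⟨_, max M₀ M₁, fun x _ ↦ hderiv x, hcont_deriv.continuousOn, by simp [htwo],
    fun x hx ↦ (hM₀ x hx).trans (le_max_left _ _), fun x hx ↦ (hM₁ x hx).trans (le_max_right _ _)⟩

theorem norm_fourierInv_propSymbol_mul_le {B' : ℝ → ℂ} {M μ t lam : ℝ}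
    (hβ : Continuous β) (hB : IsDyadicAmplitude (fun x ↦ x * β x) B' M)
    (hsupp : ∀ x, 0 < x → x ∉ Set.Icc (1 / 2) 2 → β x = 0) (hμ : 0 < μ) (ht : t ≠ 0)
    (hlam : 0 < lam) (y : E2) :
    ‖𝓕⁻ (fun ξ ↦ propSymbol μ t ξ * β (‖ξ‖ / lam)) y‖ ≤
      187200 * Real.pi * M * (√(1 + √μ * lam) ^ 3 / (√μ * |t|)) := by
  have hs : 0 < √μ := Real.sqrt_pos.2 hμ
  set H : ℝ → ℂ := fun x ↦
    β x * Complex.exp ((t / √μ * dispersion (√μ * lam * x) : ℝ) * Complex.I)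
  have hω := continuous_dispersion
  have hH : Continuous H := by fun_prop
  have hsymbol : (fun ξ ↦ propSymbol μ t ξ * β (‖ξ‖ / lam)) = fun ξ ↦ H (‖ξ‖ / lam) := by
    funext ξ
    simp only [H, propSymbol_eq, mul_assoc, mul_div_cancel₀ _ hlam.ne', mul_comm (β _ : ℂ)]
  have hphase := norm_integral_bessel_mul_exp_dispersion_le hB (div_ne_zero ht hs.ne')
    (mul_pos hs hlam) (by positivity : 0 ≤ 2 * Real.pi * ‖y‖ * lam)
  calc ‖𝓕⁻ (fun ξ ↦ propSymbol μ t ξ * β (‖ξ‖ / lam)) y‖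
      = lam ^ 2 * ‖∫ x in (1 / 2)..2, besselDeriv 0 (2 * Real.pi * ‖y‖ * lam * x) * (x * β x) *
          Complex.exp ((t / √μ * dispersion (√μ * lam * x) : ℝ) * Complex.I)‖ := by
        rw [hsymbol, fourierInv_dyadic_radial hH.continuousOn
            (fun x hx hx' ↦ by simp [H, hsupp x hx hx']) hlam, norm_mul, norm_pow,
          Complex.norm_real, Real.norm_of_nonneg hlam.le]
        simp only [H, mul_assoc]
    _ ≤ lam ^ 2 * (187200 * Real.pi * M *
          (√(1 + √μ * lam) ^ 3 / (|t / √μ| * (√μ * lam) ^ 2))) := by gcongr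
    _ = 187200 * Real.pi * M * (√(1 + √μ * lam) ^ 3 / (√μ * |t|)) := by
        have := abs_pos.2 ht
        rw [abs_div, abs_of_pos hs]
        field_simp

lemma jap_eq_sqrt (Λ : ℝ) : jap Λ = √(1 + Λ ^ 2) := by rw [jap, Real.sqrt_eq_rpow]

lemma one_add_le_two_mul_jap (Λ : ℝ) : 1 + Λ ≤ 2 * jap Λ := by
  have hone : 1 ≤ jap Λ := by rw [jap_eq_sqrt]; exact Real.one_le_sqrt.2 (by nlinarith)
  have hself : Λ ≤ jap Λ := by rw [jap_eq_sqrt]; exact Real.le_sqrt_of_sq_le (by linarith)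
  linarith

lemma sqrt_one_add_pow_three_le_jap {Λ : ℝ} (hΛ : 0 ≤ Λ) :
    √(1 + Λ) ^ 3 ≤ 4 * jap Λ ^ ((3 : ℝ) / 2) := by
  have hjap := one_add_le_two_mul_jap Λ
  calc √(1 + Λ) ^ 3 = (1 + Λ) ^ ((3 : ℝ) / 2) := by
        rw [Real.sqrt_eq_rpow, ← Real.rpow_mul_natCast (by linarith)]
        norm_num
    _ ≤ (2 * jap Λ) ^ ((3 : ℝ) / 2) := by gcongr
    _ = 2 ^ ((3 : ℝ) / 2) * jap Λ ^ ((3 : ℝ) / 2) :=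
        Real.mul_rpow zero_le_two (by linarith)
    _ ≤ 2 ^ (2 : ℝ) * jap Λ ^ ((3 : ℝ) / 2) := by
        have : 0 ≤ jap Λ := by linarith
        gcongr <;> norm_num
    _ = 4 * jap Λ ^ ((3 : ℝ) / 2) := by norm_num

end Kernel

/-! ### Fourier multipliers on `L¹` -/

section Multiplier

open scoped Convolution

variable {V : Type*} [NormedAddCommGroup V] [InnerProductSpace ℝ V] [FiniteDimensional ℝ V]
  [MeasurableSpace V] [BorelSpace V] {m f : V → ℂ}

lemma fourier_exp_mul_eq_fourierInv (m : V → ℂ) (x z : V) :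
    𝓕 (fun ξ ↦ Complex.exp ((2 * Real.pi * inner ℝ ξ x : ℝ) * Complex.I) * m ξ) z =
      𝓕⁻ m (x - z) := by
  rw [Real.fourier_eq', Real.fourierInv_eq']
  congr with ξ
  rw [smul_eq_mul, smul_eq_mul, ← mul_assoc, ← Complex.exp_add, inner_sub_right]
  push_cast
  ring_nf

theorem fourierInv_mul_fourier_eq_convolution (hm : Integrable m) (hf : Integrable f) :
    𝓕⁻ (fun ξ ↦ m ξ * 𝓕 f ξ) = f ⋆[ContinuousLinearMap.mul ℂ ℂ] 𝓕⁻ m := by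
  ext x
  have hint : Integrable fun ξ ↦
      Complex.exp ((2 * Real.pi * inner ℝ ξ x : ℝ) * Complex.I) * m ξ :=
    hm.bdd_mul (c := 1) (Continuous.aestronglyMeasurable (by fun_prop))
      (.of_forall fun ξ ↦ (Complex.norm_exp_ofReal_mul_I _).le)
  calc 𝓕⁻ (fun ξ ↦ m ξ * 𝓕 f ξ) x
      = ∫ ξ, 𝓕 f ξ • (Complex.exp ((2 * Real.pi * inner ℝ ξ x : ℝ) * Complex.I) * m ξ) := by
        rw [Real.fourierInv_eq']
        congr with ξ
        simp only [smul_eq_mul]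
        ring
    _ = ∫ z, f z • 𝓕 (fun ξ ↦
          Complex.exp ((2 * Real.pi * inner ℝ ξ x : ℝ) * Complex.I) * m ξ) z := by
        simpa using! VectorFourier.integral_fourierIntegral_smul_eq_flip (L := innerₗ V)
          Real.continuous_fourierChar continuous_inner hf hint
    _ = (f ⋆[ContinuousLinearMap.mul ℂ ℂ] 𝓕⁻ m) x := by
        simp only [fourier_exp_mul_eq_fourierInv]
        rfl

theorem eLpNorm_fourierInv_mul_fourier_le {K : ℝ} (hm : Integrable m) (hf : Integrable f)
    (hK : ∀ y, ‖𝓕⁻ m y‖ ≤ K) :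
    eLpNorm (𝓕⁻ (fun ξ ↦ m ξ * 𝓕 f ξ)) ⊤ volume ≤ ENNReal.ofReal K * eLpNorm f 1 volume := by
  have hK_nonneg : 0 ≤ K := (norm_nonneg _).trans (hK 0)
  have hbound : ∀ x, ‖𝓕⁻ (fun ξ ↦ m ξ * 𝓕 f ξ) x‖ ≤ K * ∫ z, ‖f z‖ := fun x ↦ by
    rw [fourierInv_mul_fourier_eq_convolution hm hf, ← integral_const_mul]
    refine norm_integral_le_of_norm_le (hf.norm.const_mul K) (.of_forall fun z ↦ ?_)
    rw [ContinuousLinearMap.mul_apply', norm_mul, mul_comm]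
    exact mul_le_mul_of_nonneg_right (hK _) (norm_nonneg _)
  calc eLpNorm (𝓕⁻ (fun ξ ↦ m ξ * 𝓕 f ξ)) ⊤ volume ≤ ENNReal.ofReal (K * ∫ z, ‖f z‖) := by
        rw [eLpNorm_exponent_top]
        exact eLpNormEssSup_le_of_ae_bound (.of_forall hbound)
    _ = ENNReal.ofReal K * eLpNorm f 1 volume := by
        rw [ENNReal.ofReal_mul hK_nonneg, eLpNorm_one_eq_lintegral_enorm,
          ofReal_integral_norm_eq_lintegral_enorm hf]

theorem fourier_fourierInv_mul_fourier (m : 𝓢(V, ℂ)) (hf : Integrable f) :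
    𝓕 (𝓕⁻ (fun ξ ↦ m ξ * 𝓕 f ξ)) = fun ξ ↦ m ξ * 𝓕 f ξ := by
  have hkernel : Integrable (𝓕⁻ (m : V → ℂ)) := by
    rw [← SchwartzMap.fourierInv_coe]
    exact (𝓕⁻ m).integrable
  have hinv : 𝓕 (𝓕⁻ (m : V → ℂ)) = m :=
    m.continuous.fourier_fourierInv_eq m.integrable (by
      rw [← SchwartzMap.fourier_coe]
      exact (𝓕 m).integrable)
  ext ξ
  rw [fourierInv_mul_fourier_eq_convolution m.integrable hf,
    Real.fourier_mul_convolution_eq hf hkernel, hinv, mul_comm]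

lemma contDiff_comp_norm {n : WithTop ℕ∞} {F : Type*} [NormedAddCommGroup F] [InnerProductSpace ℝ F]
    {g : ℝ → ℝ} {δ : ℝ} (hg : ContDiff ℝ n g) (hδ : 0 < δ) (hzero : ∀ r, 0 ≤ r → r ≤ δ → g r = 0) :
    ContDiff ℝ n fun ξ : F ↦ g ‖ξ‖ := by
  rw [contDiff_iff_contDiffAt]
  intro ξ
  rcases eq_or_ne ξ 0 with rfl | hξ
  · refine contDiffAt_const (c := 0) |>.congr_of_eventuallyEq ?_
    filter_upwards [Metric.closedBall_mem_nhds (0 : F) hδ] with η hη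
    exact hzero _ (norm_nonneg η) (mem_closedBall_zero_iff.1 hη)
  · exact hg.contDiffAt.comp ξ (contDiffAt_norm ℝ hξ)

lemma hasCompactSupport_comp_norm {F : Type*} [NormedAddCommGroup F] [ProperSpace F]
    {g : ℝ → ℝ} {R : ℝ} (hzero : ∀ r, R ≤ r → g r = 0) :
    HasCompactSupport fun ξ : F ↦ (g ‖ξ‖ : ℂ) :=
  HasCompactSupport.intro (isCompact_closedBall (0 : F) R) fun ξ hξ ↦ by
    rw [mem_closedBall_zero_iff, not_le] at hξ
    rw [hzero _ hξ.le, Complex.ofReal_zero]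

end Multiplier

/-! ### The dispersive estimate -/

section Decay

variable {β : ℝ → ℝ} {lam : ℝ}

/-- A smooth radial dyadic cutoff `ξ ↦ β(|ξ|/λ)`, as a Schwartz function. -/
def dyadicCutoff (hβ : ContDiff ℝ (⊤ : ℕ∞) β) (hlow : ∀ s, 0 ≤ s → s ≤ 1 / 2 → β s = 0)
    (hhigh : ∀ s, 2 ≤ s → β s = 0) (hlam : 0 < lam) : 𝓢(E2, ℂ) :=
  HasCompactSupport.toSchwartzMap (f := fun ξ : E2 ↦ (β (‖ξ‖ / lam) : ℂ))
    (hasCompactSupport_comp_norm (g := fun r ↦ β (r / lam)) (R := 2 * lam) fun r hr ↦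
      hhigh _ ((le_div_iff₀ hlam).2 hr))
    (Complex.ofRealCLM.contDiff.comp <| contDiff_comp_norm (g := fun r ↦ β (r / lam))
      (δ := lam / 2) (hβ.comp (contDiff_id.div_const lam)) (half_pos hlam) fun r hr hr' ↦
        hlow _ (by positivity) ((div_le_iff₀ hlam).2 (by linarith)))

theorem eLpNorm_prop2_le (hβ : ContDiff ℝ (⊤ : ℕ∞) β)
    (hlow : ∀ s, 0 ≤ s → s ≤ 1 / 2 → β s = 0) (hhigh : ∀ s, 2 ≤ s → β s = 0) {K μ t : ℝ}
    (hlam : 0 < lam) (hK : ∀ y, ‖𝓕⁻ (fun ξ ↦ propSymbol μ t ξ * β (‖ξ‖ / lam)) y‖ ≤ K)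
    {f : E2 → ℂ} (hf : Integrable f) :
    eLpNorm (prop2 μ t (𝓕⁻ (fun ξ : E2 ↦ (β (‖ξ‖ / lam) : ℂ) * 𝓕 f ξ))) ⊤ volume ≤
      ENNReal.ofReal K * eLpNorm f 1 volume := by
  set cutoff := dyadicCutoff hβ hlow hhigh hlam
  have hint : Integrable fun ξ ↦ propSymbol μ t ξ * β (‖ξ‖ / lam) :=
    cutoff.integrable.bdd_mul (c := 1) (continuous_propSymbol μ t).aestronglyMeasurable
      (.of_forall fun ξ ↦ by rw [propSymbol_eq, Complex.norm_exp_ofReal_mul_I])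
  have hprop : prop2 μ t (𝓕⁻ (fun ξ : E2 ↦ (β (‖ξ‖ / lam) : ℂ) * 𝓕 f ξ)) =
      𝓕⁻ (fun ξ ↦ propSymbol μ t ξ * β (‖ξ‖ / lam) * 𝓕 f ξ) := by
    rw [prop2, show 𝓕 (𝓕⁻ (fun ξ : E2 ↦ (β (‖ξ‖ / lam) : ℂ) * 𝓕 f ξ)) = _ from
      fourier_fourierInv_mul_fourier cutoff hf]
    simp only [mul_assoc]
    rfl
  rw [hprop]
  exact eLpNorm_fourierInv_mul_fourier_le hint hf hK

theorem dispersive_decay_2d_general (hβ : ContDiff ℝ (⊤ : ℕ∞) β)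
    (hlow : ∀ s, 0 ≤ s → s ≤ 1 / 2 → β s = 0) (hhigh : ∀ s, 2 ≤ s → β s = 0) :
    ∃ C : ℝ, 0 < C ∧ ∀ μ : ℝ, 0 < μ → ∀ lam : ℝ, 0 < lam → ∀ t : ℝ, t ≠ 0 →
      ∀ f : E2 → ℂ, Integrable f →
        eLpNorm (prop2 μ t (𝓕⁻ (fun ξ : E2 ↦ (β (‖ξ‖ / lam) : ℂ) * 𝓕 f ξ))) ⊤ volume ≤
          ENNReal.ofReal (C * μ ^ (-(1 : ℝ) / 2) * |t| ^ (-(1 : ℝ)) *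
            jap (√μ * lam) ^ ((3 : ℝ) / 2)) * eLpNorm f 1 volume := by
  have hsupp : ∀ x, 0 < x → x ∉ Set.Icc (1 / 2) 2 → β x = 0 := fun x hx hx' ↦ by
    rcases le_total x (1 / 2) with h | h
    · exact hlow x hx.le h
    · exact hhigh x (not_le.1 fun h' ↦ hx' ⟨h, h'⟩).le
  obtain ⟨B', M, hB⟩ :=
    exists_isDyadicAmplitude (hβ.of_le (mod_cast le_top)) (hhigh 2 le_rfl)
  have hM := hB.nonneg
  refine ⟨748800 * Real.pi * (M + 1), by positivity, fun μ hμ lam hlam t ht f hf ↦ ?_⟩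
  have htpos : 0 < |t| := abs_pos.2 ht
  refine eLpNorm_prop2_le hβ hlow hhigh hlam (fun y ↦ ?_) hf
  calc ‖𝓕⁻ (fun ξ ↦ propSymbol μ t ξ * β (‖ξ‖ / lam)) y‖
      ≤ 187200 * Real.pi * M * (√(1 + √μ * lam) ^ 3 / (√μ * |t|)) :=
        norm_fourierInv_propSymbol_mul_le hβ.continuous hB hsupp hμ ht hlam y
    _ ≤ 187200 * Real.pi * (M + 1) *
          (4 * jap (√μ * lam) ^ ((3 : ℝ) / 2) / (√μ * |t|)) := by
        gcongr
        · exact le_add_of_nonneg_right zero_le_one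
        · exact sqrt_one_add_pow_three_le_jap (by positivity)
    _ = _ := by
        rw [neg_div, Real.rpow_neg hμ.le, ← Real.sqrt_eq_rpow, Real.rpow_neg htpos.le,
          Real.rpow_one]
        ring

end Decay

/-- For `μ ∈ (0,1]` there is `C`, independent of `μ`, such that for all
`λ > 0`, `t ≠ 0` and Schwartz `f` on `ℝ²`:
`‖S_{μ,2}(t) P_λ f‖_{L^∞} ≤ C μ^{-1/2} |t|^{-1} ⟨√μ λ⟩^{3/2} ‖f‖_{L^1}`. -/
theorem dispersive_decay_2d (χ : ℝ → ℝ) (hχ : ContDiff ℝ (⊤ : ℕ∞) χ)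
    (hsupp : Function.support χ ⊆ Set.Ioo (-2 : ℝ) 2)
    (hone : ∀ s ∈ Set.Icc (-1 : ℝ) 1, χ s = 1) :
    ∃ C : ℝ, 0 < C ∧
      ∀ μ : ℝ, 0 < μ → μ ≤ 1 →
        ∀ lam : ℝ, 0 < lam → ∀ t : ℝ, t ≠ 0 → ∀ f : 𝓢(E2, ℂ),
          eLpNorm (prop2 μ t (proj2 χ lam ⇑f)) ⊤ volume
            ≤ ENNReal.ofReal (C * μ ^ (-(1 : ℝ) / 2) * |t| ^ (-(1 : ℝ)) *
                jap (Real.sqrt μ * lam) ^ ((3 : ℝ) / 2)) *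
              eLpNorm (⇑f) 1 volume := by
  have hzero : ∀ s, 2 ≤ s → χ s = 0 := fun s hs ↦
    Function.notMem_support.1 fun hmem ↦ (hsupp hmem).2.not_ge hs
  obtain ⟨C, hC, hdecay⟩ := dispersive_decay_2d_general (β := fun s ↦ χ s - χ (2 * s))
    (hχ.sub (hχ.comp (contDiff_const.mul contDiff_id)))
    (fun s hs hs' ↦ by
      rw [hone s ⟨by linarith, by linarith⟩, hone (2 * s) ⟨by linarith, by linarith⟩, sub_self])
    (fun s hs ↦ by rw [hzero s hs, hzero (2 * s) (by linarith), sub_self])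
  refine ⟨C, hC, fun μ hμ _ lam hlam t ht f ↦ ?_⟩
  simpa only [proj2, mul_div_assoc] using hdecay μ hμ lam hlam t ht f f.integrable
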